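/- There exists an absolute constant C > 0 such that for every σ-finite Borel measure μ on ℝ², every t > 0, and all x₁ ≠ x₂ in ℝ², writing x̄ = (x₁ + x₂)/2 and r = (x₁ - x₂)/2, one has (μ * q_t)(x₁, x₂) ≤ C · (μ * p_t)(x̄) · ( t · p_{t/2}(r) + log₊(t/|r|²) ), where log₊ a = max(log a, 0). -/

import Mathlib

open Filter MeasureTheory

/-- The standard Gaussian density `p_t(x) = (2πt)^{-d/2} exp(-|x|²/(2t))` on `ℝ^d`. -/
noncomputable def gaussDensity (d : ℕ) (t : ℝ) (x : EuclideanSpace ℝ (Fin d)) : ℝ :=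
  (2 * Real.pi * t) ^ (-(d : ℝ) / 2) * Real.exp (-‖x‖ ^ 2 / (2 * t))

/-- The covariance density
`q_t(x₁, x₂) = 2 ∫₀^t ∫ p_s(u) p_{t-s}(x₁ - u) p_{t-s}(x₂ - u) du ds`. -/
noncomputable def gaussQ (d : ℕ) (t : ℝ) (x₁ x₂ : EuclideanSpace ℝ (Fin d)) : ℝ :=
  2 * ∫ s in Set.Ioc (0:ℝ) t,
      ∫ u, gaussDensity d s u * gaussDensity d (t - s) (x₁ - u)
        * gaussDensity d (t - s) (x₂ - u) ∂volume

/-!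
With `x̄ = (x₁ + x₂)/2`, completing the square gives
`p_a(x₁ - u) p_a(x₂ - u) = p_{2a}(x₁ - x₂) p_{a/2}(x̄ - u)`, so the semigroup property of the heat
kernel turns `q_t(x₁, x₂)` into `2 ∫₀ᵗ p_{2(t-s)}(x₁ - x₂) p_{(t+s)/2}(x̄) ds`. Since `(t + s)/2` is
comparable to `t`, a constant multiple of `p_t(x̄)` can be pulled out of the integral. In dimension
two what remains is, with `r = (x₁ - x₂)/2`, a multiple of `∫₀ᵗ e^{-|r|²/a} da/a = E₁(|r|²/t)`, and
the exponential integral satisfies `E₁(z) ≤ e^{-z} log(1 + 1/z)`. Subtracting `u` from both points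
leaves `x₁ - x₂` unchanged and moves `x̄` to `x̄ - u`, so the pointwise bound can be integrated
against `μ`.
-/

open scoped Topology

section RealIntegrals

variable {ρ : ℝ}

theorem exp_neg_div_le_one {a : ℝ} (hρ : 0 ≤ ρ) (ha : 0 ≤ a) : Real.exp (-ρ / a) ≤ 1 :=
  Real.exp_le_one_iff.2 (div_nonpos_of_nonpos_of_nonneg (neg_nonpos.2 hρ) ha)

theorem integrableOn_rpow_neg_mul_exp_neg_div (hρ : 0 < ρ) (p t : ℝ) :
    IntegrableOn (fun a : ℝ => a ^ (-p) * Real.exp (-ρ / a)) (Set.Icc 0 t) := by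
  have tendsto_zero : Tendsto (fun a : ℝ => a ^ (-p) * Real.exp (-ρ / a)) (𝓝[>] 0) (𝓝 0) := by
    refine ((tendsto_rpow_mul_exp_neg_mul_atTop_nhds_zero p ρ hρ).comp
      tendsto_inv_nhdsGT_zero).congr' ?_
    filter_upwards [self_mem_nhdsWithin] with a ha
    rw [Function.comp_apply, Real.inv_rpow (le_of_lt ha), Real.rpow_neg (le_of_lt ha),
      div_eq_mul_inv]
  -- For `p = 0` the value at `a = 0` is `1` and not the limit `0`, hence the update.
  have continuousOn_update :
      ContinuousOn (Function.update (fun a : ℝ => a ^ (-p) * Real.exp (-ρ / a)) 0 0)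
        (Set.Icc 0 t) := by
    refine continuousOn_update_iff.2 ⟨fun a ha => ?_, fun _ => tendsto_zero.mono_left
      (nhdsWithin_mono _ fun a ha => lt_of_le_of_ne ha.1.1 (Ne.symm ha.2))⟩
    have ha0 : a ≠ 0 := ha.2
    exact ((Real.continuousAt_rpow_const _ _ (Or.inl ha0)).mul
      (continuousAt_const.div continuousAt_id ha0).rexp).continuousWithinAt
  rw [integrableOn_Icc_iff_integrableOn_Ioc]
  refine (continuousOn_update.integrableOn_Icc.mono_set Set.Ioc_subset_Icc_self).congr_fun
    (fun a ha => ?_) measurableSet_Ioc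
  exact Function.update_of_ne ha.1.ne' _ _

theorem integrableOn_inv_mul_exp_neg_div (hρ : 0 < ρ) (t : ℝ) :
    IntegrableOn (fun a : ℝ => a⁻¹ * Real.exp (-ρ / a)) (Set.Icc 0 t) := by
  simpa only [Real.rpow_neg_one] using integrableOn_rpow_neg_mul_exp_neg_div hρ 1 t

theorem hasDerivAt_exp_neg_div_mul_log {a : ℝ} (hρ : 0 < ρ) (ha : 0 < a) :
    HasDerivAt (fun a => Real.exp (-ρ / a) * Real.log (1 + a / ρ))
      (Real.exp (-ρ / a) * (ρ / a ^ 2 * Real.log (1 + a / ρ) + (ρ + a)⁻¹)) a := by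
  have hexp : HasDerivAt (fun a => Real.exp (-ρ / a)) (Real.exp (-ρ / a) * (ρ / a ^ 2)) a := by
    simpa using ((hasDerivAt_const a (-ρ)).fun_div (hasDerivAt_id' a) ha.ne').exp
  have hlog : HasDerivAt (fun a => Real.log (1 + a / ρ)) (ρ⁻¹ / (1 + a / ρ)) a := by
    simpa only [one_div] using (((hasDerivAt_id' a).div_const ρ).const_add 1).log (by positivity)
  refine (hexp.mul hlog).congr_deriv ?_
  field_simp

theorem continuousOn_exp_neg_div_mul_log (hρ : 0 < ρ) :
    ContinuousOn (fun a => Real.exp (-ρ / a) * Real.log (1 + a / ρ)) (Set.Ici 0) := by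
  intro a ha
  rcases (Set.mem_Ici.1 ha).eq_or_lt with rfl | ha
  · -- Although `-ρ / 0 = 0`, the value at `0` is the limit because the logarithm vanishes there.
    have continuousAt_log : ContinuousAt (fun a => Real.log (1 + a / ρ)) 0 :=
      ContinuousAt.log (by fun_prop) (by simp)
    have log_tendsto_zero : Tendsto (fun a => Real.log (1 + a / ρ)) (𝓝[≥] 0) (𝓝 0) := by
      simpa using continuousAt_log.continuousWithinAt.tendsto
    have norm_le_log : ∀ᶠ a in 𝓝[≥] (0 : ℝ),
        ‖Real.exp (-ρ / a) * Real.log (1 + a / ρ)‖ ≤ Real.log (1 + a / ρ) := by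
      filter_upwards [self_mem_nhdsWithin] with a ha
      have ha : 0 ≤ a := ha
      have log_nonneg : 0 ≤ Real.log (1 + a / ρ) :=
        Real.log_nonneg (le_add_of_nonneg_right (by positivity))
      rw [Real.norm_of_nonneg (by positivity)]
      exact mul_le_of_le_one_left log_nonneg (exp_neg_div_le_one hρ.le ha)
    simpa [ContinuousWithinAt] using squeeze_zero_norm' norm_le_log log_tendsto_zero
  · exact (hasDerivAt_exp_neg_div_mul_log hρ ha).continuousAt.continuousWithinAt

theorem integral_inv_mul_exp_neg_div_le {t : ℝ} (hρ : 0 < ρ) (ht : 0 ≤ t) :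
    ∫ a in (0 : ℝ)..t, a⁻¹ * Real.exp (-ρ / a) ≤ Real.exp (-ρ / t) * Real.log (1 + t / ρ) := by
  have deriv_ge : ∀ a ∈ Set.Ioo 0 t, a⁻¹ * Real.exp (-ρ / a) ≤
      Real.exp (-ρ / a) * (ρ / a ^ 2 * Real.log (1 + a / ρ) + (ρ + a)⁻¹) := by
    intro a ha
    have ha : 0 < a := ha.1
    calc a⁻¹ * Real.exp (-ρ / a)
        = Real.exp (-ρ / a) * (ρ / a ^ 2 * (1 - (1 + a / ρ)⁻¹) + (ρ + a)⁻¹) := by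
          field_simp
          ring
      _ ≤ Real.exp (-ρ / a) * (ρ / a ^ 2 * Real.log (1 + a / ρ) + (ρ + a)⁻¹) := by
          gcongr
          exact Real.one_sub_inv_le_log_of_pos (by positivity)
  simpa using intervalIntegral.integral_le_sub_of_hasDeriv_right_of_le ht
    ((continuousOn_exp_neg_div_mul_log hρ).mono Set.Icc_subset_Ici_self)
    (fun a ha => (hasDerivAt_exp_neg_div_mul_log hρ ha.1).hasDerivWithinAt)
    (integrableOn_inv_mul_exp_neg_div hρ t) deriv_ge

theorem log_one_add_le_log_two_add_posLog (z : ℝ) :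
    Real.log (1 + z) ≤ Real.log 2 + Real.posLog z := by
  calc Real.log (1 + z) ≤ Real.posLog (1 + z) := le_max_right _ _
    _ ≤ Real.log 2 + Real.posLog 1 + Real.posLog z := Real.posLog_add
    _ = Real.log 2 + Real.posLog z := by simp [Real.posLog_def]

theorem integral_inv_mul_exp_neg_div_le_add_posLog {t : ℝ} (hρ : 0 < ρ) (ht : 0 ≤ t) :
    ∫ a in (0 : ℝ)..t, a⁻¹ * Real.exp (-ρ / a) ≤ Real.exp (-ρ / t) + Real.posLog (t / ρ) := by
  calc ∫ a in (0 : ℝ)..t, a⁻¹ * Real.exp (-ρ / a)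
      ≤ Real.exp (-ρ / t) * Real.log (1 + t / ρ) := integral_inv_mul_exp_neg_div_le hρ ht
    _ ≤ Real.exp (-ρ / t) * (1 + Real.posLog (t / ρ)) := by
        gcongr
        linarith [log_one_add_le_log_two_add_posLog (t / ρ), Real.log_two_lt_d9]
    _ ≤ Real.exp (-ρ / t) + Real.posLog (t / ρ) := by
        rw [mul_add, mul_one]
        gcongr
        exact mul_le_of_le_one_left Real.posLog_nonneg (exp_neg_div_le_one hρ.le ht)

end RealIntegrals

section HeatKernel

variable {d : ℕ} {s t : ℝ}

theorem gaussDensity_nonneg (ht : 0 ≤ t) (x : EuclideanSpace ℝ (Fin d)) :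
    0 ≤ gaussDensity d t x := by
  unfold gaussDensity
  positivity

theorem gaussDensity_neg (t : ℝ) (x : EuclideanSpace ℝ (Fin d)) :
    gaussDensity d t (-x) = gaussDensity d t x := by
  simp only [gaussDensity, norm_neg]

theorem gaussDensity_two (t : ℝ) (x : EuclideanSpace ℝ (Fin 2)) :
    gaussDensity 2 t x = (2 * Real.pi * t)⁻¹ * Real.exp (-‖x‖ ^ 2 / (2 * t)) := by
  rw [gaussDensity, Nat.cast_ofNat, neg_div, div_self two_ne_zero, Real.rpow_neg_one]

theorem integral_gaussDensity (ht : 0 < t) :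
    ∫ x : EuclideanSpace ℝ (Fin d), gaussDensity d t x = 1 := by
  have hexp : ∀ x : EuclideanSpace ℝ (Fin d),
      Real.exp (-‖x‖ ^ 2 / (2 * t)) = Real.exp (-(2 * t)⁻¹ * ‖x‖ ^ 2) := fun x => by
    congr 1
    ring
  simp only [gaussDensity, hexp]
  rw [integral_const_mul, GaussianFourier.integral_rexp_neg_mul_sq_norm (by positivity),
    finrank_euclideanSpace_fin, div_inv_eq_mul, mul_comm Real.pi, mul_right_comm, neg_div,
    Real.rpow_neg (by positivity), inv_mul_cancel₀ (by positivity)]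

theorem gaussDensity_le_rpow_mul (hs : 0 < s) (hst : s ≤ t) (x : EuclideanSpace ℝ (Fin d)) :
    gaussDensity d s x ≤ (t / s) ^ ((d : ℝ) / 2) * gaussDensity d t x := by
  have ht : 0 < t := hs.trans_le hst
  have hconst : (2 * Real.pi * s) ^ (-(d : ℝ) / 2) =
      (t / s) ^ ((d : ℝ) / 2) * (2 * Real.pi * t) ^ (-(d : ℝ) / 2) := by
    rw [show 2 * Real.pi * t = t / s * (2 * Real.pi * s) by field_simp, neg_div,
      Real.mul_rpow (x := t / s) (by positivity) (by positivity),
      Real.rpow_neg (x := t / s) (by positivity), mul_inv_cancel_left₀ (by positivity)]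
  have hexp : Real.exp (-‖x‖ ^ 2 / (2 * s)) ≤ Real.exp (-‖x‖ ^ 2 / (2 * t)) := by
    rw [neg_div, neg_div]
    gcongr
  calc gaussDensity d s x
      = (t / s) ^ ((d : ℝ) / 2) * ((2 * Real.pi * t) ^ (-(d : ℝ) / 2) *
          Real.exp (-‖x‖ ^ 2 / (2 * s))) := by rw [gaussDensity, hconst, mul_assoc]
    _ ≤ (t / s) ^ ((d : ℝ) / 2) * gaussDensity d t x := by
        unfold gaussDensity
        gcongr

theorem gaussDensity_le_two_rpow_mul (hs : 0 < s) (hst : s ≤ t) (hts : t ≤ 2 * s)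
    (x : EuclideanSpace ℝ (Fin d)) :
    gaussDensity d s x ≤ 2 ^ ((d : ℝ) / 2) * gaussDensity d t x := by
  have ht : 0 < t := hs.trans_le hst
  have hratio : t / s ≤ 2 := (div_le_iff₀ hs).2 hts
  refine (gaussDensity_le_rpow_mul hs hst x).trans ?_
  gcongr
  exact gaussDensity_nonneg ht.le x

theorem gaussDensity_mul_gaussDensity_sub (hs : 0 < s) (ht : 0 < t)
    (u x : EuclideanSpace ℝ (Fin d)) :
    gaussDensity d s u * gaussDensity d t (x - u) =
      gaussDensity d (s + t) x *
        gaussDensity d (s * t / (s + t)) (u - (s / (s + t)) • x) := by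
  have hconst : (2 * Real.pi * s) * (2 * Real.pi * t) =
      (2 * Real.pi * (s + t)) * (2 * Real.pi * (s * t / (s + t))) := by field_simp
  have hexponent : -‖u‖ ^ 2 / (2 * s) + -‖x - u‖ ^ 2 / (2 * t) =
      -‖x‖ ^ 2 / (2 * (s + t)) +
        -‖u - (s / (s + t)) • x‖ ^ 2 / (2 * (s * t / (s + t))) := by
    rw [norm_sub_sq_real x u, norm_sub_sq_real u, norm_smul, inner_smul_right,
      real_inner_comm x u, Real.norm_of_nonneg (by positivity)]
    field_simp
    ring
  simp only [gaussDensity]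
  rw [mul_mul_mul_comm, ← Real.mul_rpow (by positivity) (by positivity), ← Real.exp_add, hconst,
    hexponent, Real.exp_add, Real.mul_rpow (by positivity) (by positivity), mul_mul_mul_comm]

theorem integral_gaussDensity_mul_gaussDensity_sub (hs : 0 < s) (ht : 0 < t)
    (x : EuclideanSpace ℝ (Fin d)) :
    ∫ u, gaussDensity d s u * gaussDensity d t (x - u) = gaussDensity d (s + t) x := by
  simp only [gaussDensity_mul_gaussDensity_sub hs ht]
  rw [integral_const_mul, integral_sub_right_eq_self (gaussDensity d (s * t / (s + t))),
    integral_gaussDensity (by positivity), mul_one]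

theorem gaussDensity_sub_mul_gaussDensity_sub (ht : 0 < t) (x₁ x₂ u : EuclideanSpace ℝ (Fin d)) :
    gaussDensity d t (x₁ - u) * gaussDensity d t (x₂ - u) =
      gaussDensity d (2 * t) (x₁ - x₂) *
        gaussDensity d (t / 2) ((2 : ℝ)⁻¹ • (x₁ + x₂) - u) := by
  have htime : t * t / (t + t) = t / 2 := by field_simp; norm_num
  have hmid : x₁ - u - (t / (t + t)) • (x₁ - x₂) = (2 : ℝ)⁻¹ • (x₁ + x₂) - u := by
    rw [show t / (t + t) = 2⁻¹ by field_simp; norm_num]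
    module
  rw [← gaussDensity_neg t (x₂ - u), show -(x₂ - u) = x₁ - x₂ - (x₁ - u) by abel,
    gaussDensity_mul_gaussDensity_sub ht ht, htime, hmid, two_mul]

theorem integral_gaussDensity_mul_gaussDensity_sub_mul_gaussDensity_sub
    (hs : 0 < s) (ht : 0 < t) (x₁ x₂ : EuclideanSpace ℝ (Fin d)) :
    ∫ u, gaussDensity d s u * gaussDensity d t (x₁ - u) * gaussDensity d t (x₂ - u) =
      gaussDensity d (2 * t) (x₁ - x₂) *
        gaussDensity d (s + t / 2) ((2 : ℝ)⁻¹ • (x₁ + x₂)) := by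
  simp only [mul_assoc, gaussDensity_sub_mul_gaussDensity_sub ht,
    mul_left_comm (gaussDensity d s _)]
  rw [integral_const_mul, integral_gaussDensity_mul_gaussDensity_sub hs (half_pos ht)]

theorem intervalIntegrable_gaussDensity_two_mul {x : EuclideanSpace ℝ (Fin d)} (hx : x ≠ 0)
    (ht : 0 ≤ t) : IntervalIntegrable (fun a => gaussDensity d (2 * a) x) volume 0 t := by
  rw [intervalIntegrable_iff_integrableOn_Icc_of_le ht]
  have hρ : 0 < ‖x‖ ^ 2 / 4 := by positivity
  refine IntegrableOn.congr_fun
    ((integrableOn_rpow_neg_mul_exp_neg_div hρ ((d : ℝ) / 2) t).const_mul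
      ((4 * Real.pi) ^ (-(d : ℝ) / 2))) (fun a ha => ?_) measurableSet_Icc
  have hexponent : -‖x‖ ^ 2 / (2 * (2 * a)) = -(‖x‖ ^ 2 / 4) / a := by
    ring
  simp only [gaussDensity]
  rw [show 2 * Real.pi * (2 * a) = 4 * Real.pi * a by ring,
    Real.mul_rpow (by positivity) ha.1, hexponent, neg_div (2 : ℝ) (d : ℝ), mul_assoc]

end HeatKernel

section CovarianceDensity

variable {d : ℕ} {t : ℝ}

theorem gaussQ_eq_integral (t : ℝ) (x₁ x₂ : EuclideanSpace ℝ (Fin d)) :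
    gaussQ d t x₁ x₂ = 2 * ∫ s in Set.Ioo (0 : ℝ) t,
      gaussDensity d (2 * (t - s)) (x₁ - x₂) *
        gaussDensity d ((t + s) / 2) ((2 : ℝ)⁻¹ • (x₁ + x₂)) := by
  rw [gaussQ, integral_Ioc_eq_integral_Ioo]
  congr 1
  refine setIntegral_congr_fun measurableSet_Ioo fun s hs => ?_
  simp only [integral_gaussDensity_mul_gaussDensity_sub_mul_gaussDensity_sub hs.1
    (sub_pos.2 hs.2)]
  rw [show s + (t - s) / 2 = (t + s) / 2 by ring]

theorem gaussQ_le (ht : 0 ≤ t) {x₁ x₂ : EuclideanSpace ℝ (Fin d)} (hne : x₁ ≠ x₂) :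
    gaussQ d t x₁ x₂ ≤ 2 * (2 ^ ((d : ℝ) / 2) * gaussDensity d t ((2 : ℝ)⁻¹ • (x₁ + x₂)) *
      ∫ a in (0 : ℝ)..t, gaussDensity d (2 * a) (x₁ - x₂)) := by
  set m := (2 : ℝ)⁻¹ • (x₁ + x₂)
  set r := x₁ - x₂
  have midpoint_le : ∀ s ∈ Set.Ioo 0 t,
      gaussDensity d ((t + s) / 2) m ≤ 2 ^ ((d : ℝ) / 2) * gaussDensity d t m :=
    fun s hs => gaussDensity_le_two_rpow_mul (by linarith [hs.1, hs.2]) (by linarith [hs.2])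
      (by linarith [hs.1]) m
  have integrable : IntegrableOn (fun s => gaussDensity d (2 * (t - s)) r) (Set.Ioo 0 t) := by
    rw [← integrableOn_Ioc_iff_integrableOn_Ioo,
      ← intervalIntegrable_iff_integrableOn_Ioc_of_le ht]
    simpa using
      ((intervalIntegrable_gaussDensity_two_mul (sub_ne_zero.2 hne) ht).comp_sub_left t).symm
  rw [gaussQ_eq_integral]
  gcongr
  calc ∫ s in Set.Ioo 0 t, gaussDensity d (2 * (t - s)) r * gaussDensity d ((t + s) / 2) m
      ≤ ∫ s in Set.Ioo 0 t,
          2 ^ ((d : ℝ) / 2) * gaussDensity d t m * gaussDensity d (2 * (t - s)) r := by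
        refine integral_mono_of_nonneg ?_ (integrable.const_mul _) ?_
        · filter_upwards [ae_restrict_mem measurableSet_Ioo] with s hs
          exact mul_nonneg (gaussDensity_nonneg (by linarith [hs.2]) r)
            (gaussDensity_nonneg (by linarith [hs.1, hs.2]) m)
        · filter_upwards [ae_restrict_mem measurableSet_Ioo] with s hs
          rw [mul_comm]
          exact mul_le_mul_of_nonneg_right (midpoint_le s hs)
            (gaussDensity_nonneg (by linarith [hs.2]) r)
    _ = 2 ^ ((d : ℝ) / 2) * gaussDensity d t m * ∫ a in (0 : ℝ)..t, gaussDensity d (2 * a) r := by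
        rw [integral_const_mul, ← integral_Ioc_eq_integral_Ioo,
          ← intervalIntegral.integral_of_le ht,
          intervalIntegral.integral_comp_sub_left (fun a => gaussDensity d (2 * a) r),
          sub_self, sub_zero]

theorem integral_gaussDensity_two_mul_le (ht : 0 < t) {r : EuclideanSpace ℝ (Fin 2)}
    (hr : r ≠ 0) :
    4 * ∫ a in (0 : ℝ)..t, gaussDensity 2 (2 * a) ((2 : ℝ) • r) ≤
      t * gaussDensity 2 (t / 2) r + Real.posLog (t / ‖r‖ ^ 2) := by
  have hkernel : ∀ a, gaussDensity 2 (2 * a) ((2 : ℝ) • r) =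
      (4 * Real.pi)⁻¹ * (a⁻¹ * Real.exp (-‖r‖ ^ 2 / a)) := fun a => by
    rw [gaussDensity_two, norm_smul, Real.norm_ofNat, mul_pow,
      show -(2 ^ 2 * ‖r‖ ^ 2) / (2 * (2 * a)) = -‖r‖ ^ 2 / a by ring]
    ring
  have hterminal : t * gaussDensity 2 (t / 2) r = Real.pi⁻¹ * Real.exp (-‖r‖ ^ 2 / t) := by
    rw [gaussDensity_two, mul_div_cancel₀ t two_ne_zero]
    field_simp
  have hpi : Real.pi⁻¹ ≤ 1 := inv_le_one_of_one_le₀ (by linarith [Real.pi_gt_three])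
  calc 4 * ∫ a in (0 : ℝ)..t, gaussDensity 2 (2 * a) ((2 : ℝ) • r)
      = Real.pi⁻¹ * ∫ a in (0 : ℝ)..t, a⁻¹ * Real.exp (-‖r‖ ^ 2 / a) := by
        simp only [hkernel]
        rw [intervalIntegral.integral_const_mul]
        ring
    _ ≤ Real.pi⁻¹ * (Real.exp (-‖r‖ ^ 2 / t) + Real.posLog (t / ‖r‖ ^ 2)) := by
        gcongr
        exact integral_inv_mul_exp_neg_div_le_add_posLog (by positivity) ht.le
    _ ≤ t * gaussDensity 2 (t / 2) r + Real.posLog (t / ‖r‖ ^ 2) := by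
        rw [mul_add, hterminal]
        gcongr
        exact mul_le_of_le_one_left Real.posLog_nonneg hpi

theorem gaussQ_two_le (ht : 0 < t) {x₁ x₂ : EuclideanSpace ℝ (Fin 2)} (hne : x₁ ≠ x₂) :
    gaussQ 2 t x₁ x₂ ≤ gaussDensity 2 t ((2 : ℝ)⁻¹ • (x₁ + x₂)) *
      (t * gaussDensity 2 (t / 2) ((2 : ℝ)⁻¹ • (x₁ - x₂))
        + Real.posLog (t / ‖(2 : ℝ)⁻¹ • (x₁ - x₂)‖ ^ 2)) := by
  set r := (2 : ℝ)⁻¹ • (x₁ - x₂) with hr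
  have hr0 : r ≠ 0 := smul_ne_zero (by norm_num) (sub_ne_zero.2 hne)
  have hdiff : x₁ - x₂ = (2 : ℝ) • r := by rw [hr]; module
  set m := (2 : ℝ)⁻¹ • (x₁ + x₂)
  calc gaussQ 2 t x₁ x₂
      ≤ 2 * (2 * gaussDensity 2 t m *
          ∫ a in (0 : ℝ)..t, gaussDensity 2 (2 * a) ((2 : ℝ) • r)) := by
        simpa only [hdiff, Nat.cast_ofNat, div_self (two_ne_zero (α := ℝ)), Real.rpow_one]
          using gaussQ_le ht.le hne
    _ = gaussDensity 2 t m *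
          (4 * ∫ a in (0 : ℝ)..t, gaussDensity 2 (2 * a) ((2 : ℝ) • r)) := by ring
    _ ≤ gaussDensity 2 t m *
          (t * gaussDensity 2 (t / 2) r + Real.posLog (t / ‖r‖ ^ 2)) :=
        mul_le_mul_of_nonneg_left (integral_gaussDensity_two_mul_le ht hr0)
          (gaussDensity_nonneg ht.le m)

end CovarianceDensity

theorem gaussQ_conv_bound_dim_two_general (μ : Measure (EuclideanSpace ℝ (Fin 2))) {t : ℝ}
    (ht : 0 < t) {x₁ x₂ : EuclideanSpace ℝ (Fin 2)} (hne : x₁ ≠ x₂) :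
    ∫⁻ u, ENNReal.ofReal (gaussQ 2 t (x₁ - u) (x₂ - u)) ∂μ ≤
      (∫⁻ u, ENNReal.ofReal (gaussDensity 2 t ((2 : ℝ)⁻¹ • (x₁ + x₂) - u)) ∂μ)
        * ENNReal.ofReal (t * gaussDensity 2 (t / 2) ((2 : ℝ)⁻¹ • (x₁ - x₂))
            + max (Real.log (t / ‖(2 : ℝ)⁻¹ • (x₁ - x₂)‖ ^ 2)) 0) := by
  rw [← lintegral_mul_const' _ _ ENNReal.ofReal_ne_top, max_comm]
  refine lintegral_mono fun u => ?_
  have hmid : (2 : ℝ)⁻¹ • (x₁ - u + (x₂ - u)) = (2 : ℝ)⁻¹ • (x₁ + x₂) - u := by module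
  have htranslate := gaussQ_two_le ht (sub_left_injective.ne hne : x₁ - u ≠ x₂ - u)
  rw [hmid, sub_sub_sub_cancel_right] at htranslate
  rw [← ENNReal.ofReal_mul (gaussDensity_nonneg ht.le _)]
  exact ENNReal.ofReal_le_ofReal htranslate

/-- **Lemma 3.3(iii).** There is an absolute constant `C > 0` such that for every σ-finite
measure `μ` on `ℝ²`, every `t > 0` and all `x₁ ≠ x₂`, with `x̄ = (x₁+x₂)/2`, `r = (x₁-x₂)/2`:
`(μ * q_t)(x₁, x₂) ≤ C (μ * p_t)(x̄) (t p_{t/2}(r) + log₊(t/|r|²))`. -/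
theorem gaussQ_conv_bound_dim_two :
    ∃ C : ℝ, 0 < C ∧
      ∀ (μ : Measure (EuclideanSpace ℝ (Fin 2))), SigmaFinite μ →
      ∀ t : ℝ, 0 < t → ∀ x₁ x₂ : EuclideanSpace ℝ (Fin 2), x₁ ≠ x₂ →
      ∫⁻ u, ENNReal.ofReal (gaussQ 2 t (x₁ - u) (x₂ - u)) ∂μ ≤
        ENNReal.ofReal C
          * (∫⁻ u, ENNReal.ofReal (gaussDensity 2 t ((2:ℝ)⁻¹ • (x₁ + x₂) - u)) ∂μ)
          * ENNReal.ofReal (t * gaussDensity 2 (t / 2) ((2:ℝ)⁻¹ • (x₁ - x₂))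
              + max (Real.log (t / ‖(2:ℝ)⁻¹ • (x₁ - x₂)‖ ^ 2)) 0) := by
  refine ⟨1, one_pos, fun μ _ t ht x₁ x₂ hne => ?_⟩
  simpa only [ENNReal.ofReal_one, one_mul] using gaussQ_conv_bound_dim_two_general μ ht hne
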